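/- arXiv:2211.04919 — 2 statements merged into one kernel-verified Lean document; each statement's English description precedes it below -/
import Mathlib

section
/- Fix x_0 ∈ X and a sequence (θ_j)_{j≥0} in Θ, and define x_{j+1} = τ_{θ_j}(x_j) for j ≥ 0. Let μ̂_N = (1/N)·Σ_{j=0}^{N−1} δ_{(x_j, θ_j)} be the empirical probability measures on X × Θ. Then every weak-* cluster point of the sequence (μ̂_N)_{N≥1} is a holonomic probability measure with respect to τ. -/
open MeasureTheory Filter Topology

variable {X Θ : Type*}

/-- A Borel probability measure on `X × Θ` is holonomic (w.r.t. `τ`) if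
`∫ (f(τ_θ(x)) − f(x)) dν̂(x,θ) = 0` for every `f ∈ C(X,ℝ)`. -/
def Holonomic [MeasurableSpace X] [MeasurableSpace Θ] [TopologicalSpace X]
    (τ : Θ → X → X) (μhat : Measure (X × Θ)) : Prop :=
  ∀ f : C(X, ℝ), ∫ p : X × Θ, (f (τ p.2 p.1) - f p.1) ∂μhat = 0

/-! Integrating `f ∘ τ - f` against `μ̂_N` along the orbit telescopes to `(f(x_N) - f(x_0)) / N`,
which tends to `0` because `f` is bounded on `X`. As `f ∘ τ - f` is bounded and continuous, its
integral is weak-* continuous, so the integral against a cluster point is a cluster point of a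
sequence converging to `0`, hence equal to `0`. -/

/-- The empirical measure `(1/N) Σ_{j<N} δ_{z_j}` of the first `N` terms of a sequence `z`.
For `N = 0` it is the zero measure. -/
noncomputable def empiricalMeasure {α : Type*} [MeasurableSpace α] (z : ℕ → α) (N : ℕ) :
    Measure α :=
  (N : ENNReal)⁻¹ • ∑ j ∈ Finset.range N, Measure.dirac (z j)

section Averages

variable {E : Type*} [NormedAddCommGroup E] [NormedSpace ℝ E]

lemma integral_empiricalMeasure [CompleteSpace E] {α : Type*} [MeasurableSpace α] {g : α → E}
    (hg : StronglyMeasurable g) (z : ℕ → α) (N : ℕ) :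
    ∫ a, g a ∂empiricalMeasure z N = (N : ℝ)⁻¹ • ∑ j ∈ Finset.range N, g (z j) := by
  have hint : ∀ j ∈ Finset.range N, Integrable g (Measure.dirac (z j)) := fun j _ =>
    integrable_dirac' hg enorm_lt_top
  simp only [empiricalMeasure, integral_smul_measure, integral_finsetSum_measure hint,
    integral_dirac' g _ hg, ENNReal.toReal_inv, ENNReal.toReal_natCast]

lemma tendsto_inv_smul_sum_range_sub {u : ℕ → E} (hu : Bornology.IsBounded (Set.range u)) :
    Tendsto (fun N : ℕ => (N : ℝ)⁻¹ • ∑ j ∈ Finset.range N, (u (j + 1) - u j)) atTop (𝓝 0) := by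
  obtain ⟨C, hC⟩ := Metric.isBounded_range_iff.1 hu
  have hbound : Tendsto (fun N : ℕ => (N : ℝ)⁻¹ * C) atTop (𝓝 0) := by
    simpa only [zero_mul] using (tendsto_inv_atTop_nhds_zero_nat (𝕜 := ℝ)).mul_const C
  refine squeeze_zero_norm (fun N => ?_) hbound
  calc ‖(N : ℝ)⁻¹ • ∑ j ∈ Finset.range N, (u (j + 1) - u j)‖
      = (N : ℝ)⁻¹ * dist (u N) (u 0) := by
        rw [Finset.sum_range_sub, norm_smul, norm_inv, RCLike.norm_natCast, dist_eq_norm]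
    _ ≤ (N : ℝ)⁻¹ * C := by gcongr; exact hC N 0

lemma tendsto_integral_empiricalMeasure_orbit [CompleteSpace E]
    [MeasurableSpace X] [MeasurableSpace Θ] {τ : Θ → X → X} {θs : ℕ → Θ} {xs : ℕ → X}
    (hxs : ∀ j, xs (j + 1) = τ (θs j) (xs j)) {f : X → E}
    (hf : StronglyMeasurable fun p : X × Θ => f (τ p.2 p.1) - f p.1)
    (hb : Bornology.IsBounded (Set.range (f ∘ xs))) :
    Tendsto (fun N => ∫ p : X × Θ, (f (τ p.2 p.1) - f p.1)
      ∂empiricalMeasure (fun j => (xs j, θs j)) N) atTop (𝓝 0) := by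
  simpa only [integral_empiricalMeasure hf, Function.comp_apply, hxs] using
    tendsto_inv_smul_sum_range_sub hb

end Averages

lemma eq_of_mapClusterPt_of_tendsto {ι Y : Type*} [TopologicalSpace Y] [T2Space Y]
    {L : Filter ι} {u : ι → Y} {a b : Y} (ha : MapClusterPt a L u) (hb : Tendsto u L (𝓝 b)) :
    a = b :=
  eq_of_nhds_neBot (ha.clusterPt.mono hb)

lemma integral_eq_of_mapClusterPt {ι Ω : Type*} [TopologicalSpace Ω] [MeasurableSpace Ω]
    [OpensMeasurableSpace Ω] {L : Filter ι} {ν : ι → ProbabilityMeasure Ω}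
    {μ : ProbabilityMeasure Ω} (hμ : MapClusterPt μ L ν) (g : BoundedContinuousFunction Ω ℝ)
    {c : ℝ} (hc : Tendsto (fun i => ∫ ω, g ω ∂(ν i : Measure Ω)) L (𝓝 c)) :
    ∫ ω, g ω ∂(μ : Measure Ω) = c := by
  have hcont : Continuous fun ρ : ProbabilityMeasure Ω => ∫ ω, g ω ∂(ρ : Measure Ω) :=
    ProbabilityMeasure.continuous_integral_boundedContinuousFunction g
  have hcluster : MapClusterPt (∫ ω, g ω ∂(μ : Measure Ω)) L
      fun i => ∫ ω, g ω ∂(ν i : Measure Ω) :=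
    hμ.continuousAt_comp hcont.continuousAt
  exact eq_of_mapClusterPt_of_tendsto hcluster hc

theorem clusterPt_empirical_holonomic_general
    [TopologicalSpace X] [CompactSpace X] [MeasurableSpace X]
    [TopologicalSpace Θ] [MeasurableSpace Θ] [OpensMeasurableSpace (X × Θ)]
    {τ : Θ → X → X} (hτ : Continuous fun p : Θ × X => τ p.1 p.2)
    {θs : ℕ → Θ} {xs : ℕ → X} (hxs : ∀ j, xs (j + 1) = τ (θs j) (xs j))
    {μhat : ℕ → ProbabilityMeasure (X × Θ)}
    (hμhat : ∀ᶠ N in atTop,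
      (μhat N : Measure (X × Θ)) = empiricalMeasure (fun j => (xs j, θs j)) N)
    {μ : ProbabilityMeasure (X × Θ)} (hcluster : MapClusterPt μ atTop μhat) :
    Holonomic τ (μ : Measure (X × Θ)) := by
  intro f
  let fb : BoundedContinuousFunction X ℝ := .mkOfCompact f
  let g : BoundedContinuousFunction (X × Θ) ℝ :=
    fb.compContinuous ⟨fun p => τ p.2 p.1, hτ.comp continuous_swap⟩ -
      fb.compContinuous ⟨Prod.fst, continuous_fst⟩
  have hbdd : Bornology.IsBounded (Set.range (f ∘ xs)) :=
    fb.isBounded_range.subset (Set.range_comp_subset_range xs f)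
  have hlim_empirical : Tendsto (fun N => ∫ p, g p ∂empiricalMeasure (fun j => (xs j, θs j)) N)
      atTop (𝓝 0) :=
    tendsto_integral_empiricalMeasure_orbit hxs g.continuous.stronglyMeasurable hbdd
  have hlim_μhat : Tendsto (fun N => ∫ p, g p ∂(μhat N : Measure (X × Θ))) atTop (𝓝 0) :=
    hlim_empirical.congr' (hμhat.mono fun N hN => by simp only [hN])
  exact integral_eq_of_mapClusterPt hcluster g hlim_μhat

/-- every weak-* cluster point of the empirical measures
`μ̂_N = (1/N) Σ_{j<N} δ_{(x_j, θ_j)}` along an orbit `x_{j+1} = τ_{θ_j}(x_j)` is holonomic. -/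
theorem clusterPt_empirical_holonomic
    [MetricSpace X] [CompactSpace X] [MeasurableSpace X] [BorelSpace X]
    [MetricSpace Θ] [CompactSpace Θ] [MeasurableSpace Θ] [BorelSpace Θ]
    (τ : Θ → X → X) (hτ : Continuous fun p : Θ × X => τ p.1 p.2)
    (x0 : X) (θs : ℕ → Θ) (xs : ℕ → X)
    (hx0 : xs 0 = x0)
    (hxs : ∀ j : ℕ, xs (j + 1) = τ (θs j) (xs j))
    (μhat : ℕ → ProbabilityMeasure (X × Θ))
    (hμhat : ∀ N : ℕ, 1 ≤ N →
      (μhat N : Measure (X × Θ)) =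
        ((N : ENNReal))⁻¹ • ∑ j ∈ Finset.range N, Measure.dirac (xs j, θs j))
    (μ : ProbabilityMeasure (X × Θ))
    (hcluster : MapClusterPt μ atTop μhat) :
    Holonomic τ (μ : Measure (X × Θ)) :=
  clusterPt_empirical_holonomic_general hτ hxs (eventually_atTop.2 ⟨1, hμhat⟩) hcluster
end

section
/- Let ν̂ be a holonomic Borel probability measure on X × Θ with X-marginal ν, let μ be a Borel probability measure on Θ, and suppose ν̂ disintegrates with densities with respect to μ: there is a measurable J : X × Θ → [0,∞), with (x,θ) ↦ J(x,θ)·log J(x,θ) integrable with respect to dμ(θ)dν(x), such that ∫_{X×Θ} g dν̂ = ∫_X ∫_Θ g(x,θ)·J(x,θ) dμ(θ) dν(x) for every bounded measurable g. Suppose moreover there is a strictly positive continuous function φ ∈ C(X,ℝ) that is optimal, i.e., J(x,θ) = φ(τ_θ(x))/B_μ(φ)(x) for dμ(θ)dν(x)-almost every (x,θ), where B_μ(g)(x) = ∫_Θ g(τ_θ(x)) dμ(θ). Then the average entropy h_a(ν̂) = −∫_X ∫_Θ log(J(x,θ))·J(x,θ) dμ(θ) dν(x) and the variational entropy h_v(ν̂)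 = inf { ∫_X log(B_μ(g)/g) dν : g ∈ C(X,ℝ), g > 0 } satisfy h_a(ν̂) = h_v(ν̂) = ∫_X log(B_μ(φ)/φ) dν. -/
open MeasureTheory Filter Topology

variable {X Θ : Type*}

/-- The variational entropy `h_v(ν) = inf { ∫ log(B_μ(g)/g) dν : g ∈ C(X,ℝ), g > 0 }`,
where `B_μ(g)(x) = ∫_Θ g(τ_θ(x)) dμ(θ)`. -/
noncomputable def varEntropy [MeasurableSpace X] [MeasurableSpace Θ]
    [TopologicalSpace X] [TopologicalSpace Θ]
    (τ : Θ → X → X) (μ : Measure Θ) (ν : Measure X) : ℝ :=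
  sInf {r : ℝ | ∃ g : C(X, ℝ), (∀ x, 0 < g x) ∧
    r = ∫ x, Real.log ((∫ θ, g (τ θ x) ∂μ) / g x) ∂ν}

/-!
Write `B` for the transfer operator of `(τ, μ)` and `K_g(x,θ) = g(τ_θ(x)) / (B g)(x)`, a density
along the fibres for each positive `g`. Holonomy applied to `log g` turns `∫ log (B g / g) dν` into
`-∫ log K_g dν̂`. When `ν̂` itself has density `K_φ`, the integral of `K_g / K_φ` against `ν̂` is
`1`, so `log t ≤ t - 1` (Gibbs' inequality) shows that `∫ log K_g dν̂` is largest at `g = φ`, where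
its negative is the average entropy.
-/

section BoundedPositive

variable {α β : Type*} [MeasurableSpace α] [MeasurableSpace β] {f g : α → ℝ}

/-- A measurable function whose values lie in a compact subinterval of `(0, ∞)`. Unlike continuity,
this property of the test functions `g` passes to `B_μ(g)` and to `(x, θ) ↦ g(τ_θ(x))` when `τ` is
only measurable. -/
structure IsBoundedPositive (f : α → ℝ) : Prop where
  measurable : Measurable f
  exists_mem_Icc : ∃ a b : ℝ, 0 < a ∧ ∀ x, f x ∈ Set.Icc a b

namespace IsBoundedPositive

lemma pos (hf : IsBoundedPositive f) (x : α) : 0 < f x :=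
  let ⟨_, _, ha, hab⟩ := hf.exists_mem_Icc
  ha.trans_le (hab x).1

lemma of_continuousMap {X : Type*} [TopologicalSpace X] [CompactSpace X] [MeasurableSpace X]
    [OpensMeasurableSpace X] (g : C(X, ℝ)) (hg : ∀ x, 0 < g x) : IsBoundedPositive g where
  measurable := g.continuous.measurable
  exists_mem_Icc := by
    have hlog : Continuous fun x => Real.log (g x) := g.continuous.log fun x => (hg x).ne'
    obtain ⟨C, hC⟩ := isCompact_univ.exists_bound_of_continuousOn hlog.continuousOn
    refine ⟨Real.exp (-C), Real.exp C, Real.exp_pos _, fun x => ?_⟩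
    have hx := abs_le.mp (hC x (Set.mem_univ x))
    exact ⟨(Real.le_log_iff_exp_le (hg x)).mp hx.1, (Real.log_le_iff_le_exp (hg x)).mp hx.2⟩

lemma comp (hf : IsBoundedPositive f) {u : β → α} (hu : Measurable u) :
    IsBoundedPositive fun y => f (u y) where
  measurable := hf.measurable.comp hu
  exists_mem_Icc :=
    let ⟨a, b, ha, hab⟩ := hf.exists_mem_Icc
    ⟨a, b, ha, fun y => hab (u y)⟩

lemma div (hf : IsBoundedPositive f) (hg : IsBoundedPositive g) :
    IsBoundedPositive fun x => f x / g x where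
  measurable := hf.measurable.div hg.measurable
  exists_mem_Icc := by
    obtain ⟨a, b, ha, hab⟩ := hf.exists_mem_Icc
    obtain ⟨c, d, hc, hcd⟩ := hg.exists_mem_Icc
    -- Taking `max c d` keeps the lower bound positive when `α` is empty and `d ≤ 0`.
    refine ⟨a / max c d, b / c, div_pos ha (hc.trans_le (le_max_left c d)), fun x => ⟨?_, ?_⟩⟩
    · exact div_le_div₀ (hf.pos x).le (hab x).1 (hg.pos x) ((hcd x).2.trans (le_max_right c d))
    · exact div_le_div₀ ((hf.pos x).le.trans (hab x).2) (hab x).2 hc (hcd x).1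

lemma exists_abs_le (hf : IsBoundedPositive f) : ∃ C : ℝ, ∀ x, |f x| ≤ C :=
  let ⟨_, b, _, hab⟩ := hf.exists_mem_Icc
  ⟨b, fun x => (abs_of_pos (hf.pos x)).trans_le (hab x).2⟩

lemma exists_abs_log_le (hf : IsBoundedPositive f) : ∃ C : ℝ, ∀ x, |Real.log (f x)| ≤ C :=
  let ⟨_, _, ha, hab⟩ := hf.exists_mem_Icc
  ⟨_, fun x => abs_le_max_abs_abs (Real.log_le_log ha (hab x).1)
    (Real.log_le_log (hf.pos x) (hab x).2)⟩

lemma integrable (hf : IsBoundedPositive f) (m : Measure α) [IsFiniteMeasure m] :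
    Integrable f m :=
  let ⟨C, hC⟩ := hf.exists_abs_le
  .of_bound hf.measurable.aestronglyMeasurable C (.of_forall hC)

lemma integrable_log (hf : IsBoundedPositive f) (m : Measure α) [IsFiniteMeasure m] :
    Integrable (fun x => Real.log (f x)) m :=
  let ⟨C, hC⟩ := hf.exists_abs_log_le
  .of_bound hf.measurable.log.aestronglyMeasurable C (.of_forall hC)

lemma integral_prod_right {f : α × β → ℝ} (hf : IsBoundedPositive f) (μ : Measure β)
    [IsFiniteMeasure μ] [NeZero μ] : IsBoundedPositive fun x => ∫ y, f (x, y) ∂μ where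
  measurable := hf.measurable.stronglyMeasurable.integral_prod_right'.measurable
  exists_mem_Icc := by
    obtain ⟨a, b, ha, hab⟩ := hf.exists_mem_Icc
    refine ⟨∫ _, a ∂μ, ∫ _, b ∂μ, ?_, fun x => ?_⟩
    · rw [integral_const, smul_eq_mul]
      exact mul_pos measureReal_univ_pos ha
    · have hfx : Integrable (fun y => f (x, y)) μ :=
        (hf.comp measurable_prodMk_left).integrable μ
      exact ⟨integral_mono (integrable_const a) hfx fun y => (hab (x, y)).1,
        integral_mono hfx (integrable_const b) fun y => (hab (x, y)).2⟩

end IsBoundedPositive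

end BoundedPositive

section FiberDensity

variable {α β E : Type*} [MeasurableSpace α] [MeasurableSpace β]

lemma integral_integral_congr_ae_prod [NormedAddCommGroup E] [NormedSpace ℝ E]
    {ν : Measure α} {μ : Measure β} [SFinite μ] {F G : α × β → E} (hFG : F =ᵐ[ν.prod μ] G) :
    ∫ x, ∫ y, F (x, y) ∂μ ∂ν = ∫ x, ∫ y, G (x, y) ∂μ ∂ν :=
  integral_congr_ae <| (Measure.ae_ae_of_ae_prod hFG).mono fun _ hx => integral_congr_ae hx

lemma integral_log_le_integral_log_of_integral_div_le {m : Measure α} [IsFiniteMeasure m]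
    {f g : α → ℝ} (hf : ∀ᵐ x ∂m, 0 < f x) (hg : ∀ᵐ x ∂m, 0 < g x)
    (hlogf : Integrable (fun x => Real.log (f x)) m)
    (hlogg : Integrable (fun x => Real.log (g x)) m)
    (hdiv : Integrable (fun x => f x / g x) m) (hle : ∫ x, f x / g x ∂m ≤ m.real Set.univ) :
    ∫ x, Real.log (f x) ∂m ≤ ∫ x, Real.log (g x) ∂m := by
  have hmono : ∫ x, (Real.log (f x) - Real.log (g x)) ∂m ≤ ∫ x, (f x / g x - 1) ∂m := by
    refine integral_mono_ae (hlogf.sub hlogg) (hdiv.sub (integrable_const 1)) ?_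
    filter_upwards [hf, hg] with x hfx hgx
    rw [← Real.log_div hfx.ne' hgx.ne']
    exact Real.log_le_sub_one_of_pos (div_pos hfx hgx)
  rw [integral_sub hlogf hlogg, integral_sub hdiv (integrable_const 1), integral_const, smul_eq_mul,
    mul_one] at hmono
  linarith

/-- The identity `dm(x,y) = J(x,y) dμ(y) dν(x)`, tested against bounded measurable functions. -/
def HasFiberDensity (m : Measure (α × β)) (ν : Measure α) (μ : Measure β) (J : α × β → ℝ) : Prop :=
  ∀ g : α × β → ℝ, Measurable g → (∃ C : ℝ, ∀ p, |g p| ≤ C) →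
    ∫ p, g p ∂m = ∫ x, ∫ y, g (x, y) * J (x, y) ∂μ ∂ν

/-- The average entropy `h_a = -∫∫ log(J) J dμ dν` of a measure with fibre density `J`. -/
noncomputable def averageEntropy (ν : Measure α) (μ : Measure β) (J : α × β → ℝ) : ℝ :=
  -∫ x, ∫ y, Real.log (J (x, y)) * J (x, y) ∂μ ∂ν

variable {m : Measure (α × β)} {ν : Measure α} {μ : Measure β} {J K : α × β → ℝ}

lemma HasFiberDensity.congr_ae [SFinite μ] (hJ : HasFiberDensity m ν μ J)
    (hJK : J =ᵐ[ν.prod μ] K) : HasFiberDensity m ν μ K := fun g hg hbdd =>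
  (hJ g hg hbdd).trans <|
    integral_integral_congr_ae_prod (F := fun p => g p * J p) (G := fun p => g p * K p) <|
      hJK.mono fun p hp => congrArg (g p * ·) hp

lemma averageEntropy_congr_ae [SFinite μ] (hJK : J =ᵐ[ν.prod μ] K) :
    averageEntropy ν μ J = averageEntropy ν μ K :=
  congrArg Neg.neg <| integral_integral_congr_ae_prod
    (F := fun p => Real.log (J p) * J p) (G := fun p => Real.log (K p) * K p) <|
      hJK.mono fun _ hp => congrArg (fun t => Real.log t * t) hp

lemma HasFiberDensity.averageEntropy_eq_neg_integral_log (hJ : HasFiberDensity m ν μ J)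
    (hmeas : Measurable J) (hlog : ∃ C : ℝ, ∀ p, |Real.log (J p)| ≤ C) :
    averageEntropy ν μ J = -∫ p, Real.log (J p) ∂m :=
  congrArg Neg.neg (hJ _ hmeas.log hlog).symm

end FiberDensity

section TransferOperator

variable [MeasurableSpace Θ] {τ : Θ → X → X} {μ : Measure Θ} {g : X → ℝ}

/-- The transfer operator `B_μ(g)(x) = ∫ g(τ_θ(x)) dμ(θ)`. -/
noncomputable def transferOperator (τ : Θ → X → X) (μ : Measure Θ) (g : X → ℝ) (x : X) : ℝ :=
  ∫ θ, g (τ θ x) ∂μ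

/-- The fibre density `K_g(x,θ) = g(τ_θ(x)) / B_μ(g)(x)`; optimality of `φ` means that the given
fibre density is `K_φ`. -/
noncomputable def normalizedDensity (τ : Θ → X → X) (μ : Measure Θ) (g : X → ℝ) (p : X × Θ) : ℝ :=
  g (τ p.2 p.1) / transferOperator τ μ g p.1

lemma integral_normalizedDensity {x : X} (hx : transferOperator τ μ g x ≠ 0) :
    ∫ θ, normalizedDensity τ μ g (x, θ) ∂μ = 1 :=
  (integral_div _ _).trans (div_self hx)

variable [MeasurableSpace X]

section BoundedPositive

variable [IsFiniteMeasure μ] [NeZero μ]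

lemma IsBoundedPositive.transferOperator (hτ : Measurable (Function.uncurry τ))
    (hg : IsBoundedPositive g) : IsBoundedPositive (transferOperator τ μ g) :=
  (hg.comp (hτ.comp measurable_swap)).integral_prod_right μ

lemma IsBoundedPositive.normalizedDensity (hτ : Measurable (Function.uncurry τ))
    (hg : IsBoundedPositive g) : IsBoundedPositive (normalizedDensity τ μ g) :=
  (hg.comp (hτ.comp measurable_swap)).div ((hg.transferOperator hτ).comp measurable_fst)

lemma HasFiberDensity.integral_normalizedDensity_div {m : Measure (X × Θ)} {ν : Measure X}
    {φ : X → ℝ} (hm : HasFiberDensity m ν μ (normalizedDensity τ μ φ))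
    (hτ : Measurable (Function.uncurry τ)) (hφ : IsBoundedPositive φ) (hg : IsBoundedPositive g) :
    ∫ p, normalizedDensity τ μ g p / normalizedDensity τ μ φ p ∂m = ν.real Set.univ := by
  have hKφ := hφ.normalizedDensity (μ := μ) hτ
  have hratio := (hg.normalizedDensity (μ := μ) hτ).div hKφ
  calc ∫ p, normalizedDensity τ μ g p / normalizedDensity τ μ φ p ∂m
      = ∫ x, ∫ θ, normalizedDensity τ μ g (x, θ) ∂μ ∂ν := by
        rw [hm _ hratio.measurable hratio.exists_abs_le]
        simp only [div_mul_cancel₀ _ (hKφ.pos _).ne']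
    _ = ∫ _, 1 ∂ν := by
        simp only [integral_normalizedDensity ((hg.transferOperator hτ).pos _).ne']
    _ = ν.real Set.univ := by rw [integral_const, smul_eq_mul, mul_one]

lemma HasFiberDensity.integral_log_normalizedDensity_le {m : Measure (X × Θ)} [IsFiniteMeasure m]
    {φ : X → ℝ} (hm : HasFiberDensity m m.fst μ (normalizedDensity τ μ φ))
    (hτ : Measurable (Function.uncurry τ)) (hφ : IsBoundedPositive φ) (hg : IsBoundedPositive g) :
    ∫ p, Real.log (normalizedDensity τ μ g p) ∂m ≤
      ∫ p, Real.log (normalizedDensity τ μ φ p) ∂m := by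
  have hKφ := hφ.normalizedDensity (μ := μ) hτ
  have hKg := hg.normalizedDensity (μ := μ) hτ
  have hmass : m.fst.real Set.univ = m.real Set.univ := by
    rw [measureReal_def, Measure.fst_univ, measureReal_def]
  exact integral_log_le_integral_log_of_integral_div_le (.of_forall hKg.pos) (.of_forall hKφ.pos)
    (hKg.integrable_log m) (hKφ.integrable_log m) ((hKg.div hKφ).integrable m)
    ((hm.integral_normalizedDensity_div hτ hφ hg).trans hmass).le

end BoundedPositive

variable [TopologicalSpace X] [CompactSpace X] [OpensMeasurableSpace X] [IsFiniteMeasure μ]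
  [NeZero μ] {m : Measure (X × Θ)} [IsFiniteMeasure m]

lemma Holonomic.integral_log_transferOperator_div (hm : Holonomic τ m)
    (hτ : Measurable (Function.uncurry τ)) (g : C(X, ℝ)) (hg : ∀ x, 0 < g x) :
    ∫ x, Real.log (transferOperator τ μ g x / g x) ∂m.fst =
      -∫ p, Real.log (normalizedDensity τ μ g p) ∂m := by
  have hgb := IsBoundedPositive.of_continuousMap g hg
  have hB := hgb.transferOperator (μ := μ) hτ
  have hquot := hB.div hgb
  have hcoboundary : ∫ p : X × Θ, (Real.log (g (τ p.2 p.1)) - Real.log (g p.1)) ∂m = 0 :=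
    hm ⟨fun x => Real.log (g x), g.continuous.log fun x => (hg x).ne'⟩
  have hsum : ∀ p : X × Θ, Real.log (transferOperator τ μ g p.1 / g p.1) +
      Real.log (normalizedDensity τ μ g p) = Real.log (g (τ p.2 p.1)) - Real.log (g p.1) := by
    intro p
    rw [normalizedDensity, Real.log_div (hB.pos _).ne' (hg _).ne',
      Real.log_div (hg _).ne' (hB.pos _).ne']
    ring
  rw [Measure.fst, integral_map measurable_fst.aemeasurable
      hquot.measurable.log.aestronglyMeasurable, eq_neg_iff_add_eq_zero,
    ← integral_add ((hquot.comp measurable_fst).integrable_log m)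
      ((hgb.normalizedDensity hτ).integrable_log m)]
  simp only [hsum, hcoboundary]

lemma Holonomic.varEntropy_eq_of_hasFiberDensity [TopologicalSpace Θ] (hm : Holonomic τ m)
    (hτ : Measurable (Function.uncurry τ)) (φ : C(X, ℝ)) (hφ : ∀ x, 0 < φ x)
    (hdens : HasFiberDensity m m.fst μ (normalizedDensity τ μ φ)) :
    varEntropy τ μ m.fst = ∫ x, Real.log (transferOperator τ μ φ x / φ x) ∂m.fst := by
  refine IsLeast.csInf_eq ⟨⟨φ, hφ, rfl⟩, ?_⟩
  rintro _ ⟨g, hg, rfl⟩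
  change _ ≤ ∫ x, Real.log (transferOperator τ μ g x / g x) ∂m.fst
  rw [hm.integral_log_transferOperator_div hτ φ hφ, hm.integral_log_transferOperator_div hτ g hg]
  exact neg_le_neg <| hdens.integral_log_normalizedDensity_le hτ
    (.of_continuousMap φ hφ) (.of_continuousMap g hg)

end TransferOperator

theorem average_entropy_eq_var_entropy_of_optimal_general
    [TopologicalSpace X] [CompactSpace X] [MeasurableSpace X] [OpensMeasurableSpace X]
    [TopologicalSpace Θ] [MeasurableSpace Θ]
    (τ : Θ → X → X) (hτ : Measurable (Function.uncurry τ))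
    (m : Measure (X × Θ)) [IsFiniteMeasure m] (hhol : Holonomic τ m)
    (μ : Measure Θ) [IsFiniteMeasure μ] [NeZero μ]
    (J : X × Θ → ℝ) (hJ : HasFiberDensity m m.fst μ J)
    (φ : C(X, ℝ)) (hφ : ∀ x, 0 < φ x) (hopt : J =ᵐ[m.fst.prod μ] normalizedDensity τ μ φ) :
    averageEntropy m.fst μ J = varEntropy τ μ m.fst ∧
    varEntropy τ μ m.fst = ∫ x, Real.log (transferOperator τ μ φ x / φ x) ∂m.fst := by
  have hdens : HasFiberDensity m m.fst μ (normalizedDensity τ μ φ) := hJ.congr_ae hopt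
  have hv := hhol.varEntropy_eq_of_hasFiberDensity hτ φ hφ hdens
  have hK : IsBoundedPositive (normalizedDensity τ μ φ) :=
    (IsBoundedPositive.of_continuousMap φ hφ).normalizedDensity hτ
  refine ⟨?_, hv⟩
  rw [hv, hhol.integral_log_transferOperator_div hτ φ hφ, averageEntropy_congr_ae hopt,
    hdens.averageEntropy_eq_neg_integral_log hK.measurable hK.exists_abs_log_le]

/-- if moreover there is an optimal positive continuous function `φ`, i.e.
`J(x,θ) = φ(τ_θ(x))/B_μ(φ)(x)` a.e., then
`h_a(ν̂) = h_v(ν̂) = ∫ log(B_μ(φ)/φ) dν`. -/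
theorem average_entropy_eq_var_entropy_of_optimal
    [MetricSpace X] [CompactSpace X] [MeasurableSpace X] [BorelSpace X]
    [MetricSpace Θ] [CompactSpace Θ] [MeasurableSpace Θ] [BorelSpace Θ]
    (τ : Θ → X → X) (hτ : Continuous fun p : Θ × X => τ p.1 p.2)
    (νhat : Measure (X × Θ)) [IsProbabilityMeasure νhat]
    (hhol : Holonomic τ νhat)
    (ν : Measure X) (hν : ν = νhat.map Prod.fst)
    (μ : Measure Θ) [IsProbabilityMeasure μ]
    (J : X × Θ → ℝ) (hJmeas : Measurable J) (hJnn : ∀ p, 0 ≤ J p)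
    (hJlogint : Integrable (fun p : X × Θ => J p * Real.log (J p)) (ν.prod μ))
    (hdisint : ∀ g : X × Θ → ℝ, Measurable g → (∃ C : ℝ, ∀ p, |g p| ≤ C) →
      ∫ p, g p ∂νhat = ∫ x, ∫ θ, g (x, θ) * J (x, θ) ∂μ ∂ν)
    (φ : C(X, ℝ)) (hφ : ∀ x, 0 < φ x)
    (hopt : ∀ᵐ p ∂(ν.prod μ), J p = φ (τ p.2 p.1) / ∫ θ, φ (τ θ p.1) ∂μ) :
    (-∫ x, ∫ θ, Real.log (J (x, θ)) * J (x, θ) ∂μ ∂ν) = varEntropy τ μ ν ∧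
    varEntropy τ μ ν = ∫ x, Real.log ((∫ θ, φ (τ θ x) ∂μ) / φ x) ∂ν := by
  subst hν
  exact average_entropy_eq_var_entropy_of_optimal_general τ hτ.measurable νhat hhol μ J hdisint φ hφ
    hopt
end
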